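/- Let R be a commutative Noetherian ring of finite Krull dimension with minimal primes 𝔭_1, …, 𝔭_n. For each i, let G_i be an object of D(Mod (R/𝔭_i)) with bounded finitely generated homology such that every object of D(Mod (R/𝔭_i)) with bounded finitely generated homology lies in the smallest thick subcategory of D(Mod (R/𝔭_i)) containing G_i. Then every object of D(Mod R) with bounded finitely generated homology lies in the smallest thick subcategory of D(Mod R) containing the direct sum ⊕_{i=1}^n G_i, where each G_i is regarded as a complex of R-modules via restriction of scalars along R → R/𝔭_i. (This is the affine case of the paper's Proposition: a direct sum of pushforwards of classical generators on the maximal irreducible components is a classical generator.) -/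

import Mathlib

/-!
Let `S` be the thick closure of `⊕ᵢ G i` in `D(Mod R)`. Each `G i`, restricted to `R`, is a direct
summand of the sum, so lies in `S`. Restriction of scalars along `R → R ⧸ p i` is exact and induces
a triangulated functor, so the preimage of `S` under it is thick (`IsThickSubcat.preimage`); it
contains `G i`, hence every finitely generated `R ⧸ p i`-module.

Any prime `q` of `R` contains a minimal prime `p i`, so `R ⧸ q` is such a restriction and lies in
`S`. Finitely generated `R`-modules have finite filtrations with subquotients `R ⧸ q`, so they all
lie in `S` (`single_mem_of_quotient_prime`). Finally, an object with bounded finitely generated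
homology is built by truncation from shifts of its homology modules
(`mem_of_hasBoundedFGHomology`).
-/

open CategoryTheory Limits Pretriangulated

universe v u v₂ u₂

namespace Stmt

variable {C : Type u} [Category.{v} C]

/-- `X` is a retract (direct summand) of `Y`. -/
def IsRetract (X Y : C) : Prop := ∃ (i : X ⟶ Y) (p : Y ⟶ X), i ≫ p = 𝟙 X

section Thick

variable [HasZeroObject C] [Preadditive C] [HasShift C ℤ]
  [∀ n : ℤ, (shiftFunctor C n).Additive] [Pretriangulated C]

/-- A collection of objects of a pretriangulated category is a thick (triangulated)
subcategory when it contains the zero objects, and is closed under shifts, cones of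
morphisms between its objects (two-out-of-three for distinguished triangles), and
direct summands (retracts). -/
def IsThickSubcat (S : Set C) : Prop :=
  (∀ X : C, IsZero X → X ∈ S) ∧
  (∀ X ∈ S, ∀ n : ℤ, (X⟦n⟧ : C) ∈ S) ∧
  (∀ T : Triangle C, (T ∈ distTriang C) → T.obj₁ ∈ S → T.obj₂ ∈ S → T.obj₃ ∈ S) ∧
  (∀ X Y : C, Y ∈ S → IsRetract X Y → X ∈ S)

/-- The smallest thick subcategory (as a collection of objects) containing `A`. -/
def thickClosure (A : Set C) : Set C := ⋂₀ {S : Set C | A ⊆ S ∧ IsThickSubcat S}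

end Thick

/-- An object of the derived category of `A`-modules has bounded finitely generated
homology if its homology modules are all finitely generated and vanish in all but
finitely many degrees. -/
def HasBoundedFGHomology (A : Type u) [CommRing A] [HasDerivedCategory (ModuleCat.{u} A)]
    (X : DerivedCategory (ModuleCat.{u} A)) : Prop :=
  (∀ m : ℤ, Module.Finite A ((DerivedCategory.homologyFunctor (ModuleCat.{u} A) m).obj X)) ∧
  {m : ℤ | ¬ IsZero ((DerivedCategory.homologyFunctor (ModuleCat.{u} A) m).obj X)}.Finite

section Thick

variable [HasZeroObject C] [Preadditive C] [HasShift C ℤ]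
  [∀ n : ℤ, (shiftFunctor C n).Additive] [Pretriangulated C]

lemma isThickSubcat_thickClosure (A : Set C) : IsThickSubcat (thickClosure A) := by
  refine ⟨fun X hX S hS => hS.2.1 X hX, fun X hX n S hS => hS.2.2.1 X (hX S hS) n,
    fun T hT h₁ h₂ S hS => hS.2.2.2.1 T hT (h₁ S hS) (h₂ S hS),
    fun X Y hY h S hS => hS.2.2.2.2 X Y (hY S hS) h⟩

lemma subset_thickClosure (A : Set C) : A ⊆ thickClosure A := fun _ hX _ hS => hS.1 hX

lemma thickClosure_subset {A S : Set C} (hA : A ⊆ S) (hS : IsThickSubcat S) :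
    thickClosure A ⊆ S := fun _ hX => hX S ⟨hA, hS⟩

lemma IsThickSubcat.of_iso {S : Set C} (hS : IsThickSubcat S) {X Y : C} (e : X ≅ Y)
    (hX : X ∈ S) : Y ∈ S :=
  hS.2.2.2 Y X hX ⟨e.inv, e.hom, e.inv_hom_id⟩

/-- A thick subcategory is closed under extensions: rotate the triangle backwards. -/
lemma IsThickSubcat.ext₂ {S : Set C} (hS : IsThickSubcat S) (T : Triangle C)
    (hT : T ∈ distTriang C) (h₁ : T.obj₁ ∈ S) (h₃ : T.obj₃ ∈ S) : T.obj₂ ∈ S :=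
  hS.2.2.1 T.invRotate (inv_rot_of_distTriang _ hT) (hS.2.1 _ h₃ (-1)) h₁

/-- The preimage of a thick subcategory under a triangulated functor is thick. -/
lemma IsThickSubcat.preimage {D : Type u₂} [Category.{v₂} D] [HasZeroObject D] [Preadditive D]
    [HasShift D ℤ] [∀ n : ℤ, (shiftFunctor D n).Additive] [Pretriangulated D]
    {S : Set C} (hS : IsThickSubcat S) (F : D ⥤ C) [F.CommShift ℤ] [F.IsTriangulated] :
    IsThickSubcat {X : D | F.obj X ∈ S} := by
  refine ⟨fun X hX => hS.1 _ (F.map_isZero hX),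
    fun X hX n => hS.of_iso ((F.commShiftIso n).symm.app X) (hS.2.1 _ hX n),
    fun T hT h₁ h₂ => hS.2.2.1 (F.mapTriangle.obj T) (F.map_distinguished T hT) h₁ h₂, ?_⟩
  rintro X Y hY ⟨i, p, h⟩
  exact hS.2.2.2 _ _ hY ⟨F.map i, F.map p, by rw [← F.map_comp, h, F.map_id]⟩

end Thick

section Derived

open DerivedCategory

variable {A : Type u} [CommRing A]

lemma finite_of_iso {M N : ModuleCat.{u} A} (e : M ≅ N) [Module.Finite A M] :
    Module.Finite A N := Module.Finite.equiv e.toLinearEquiv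

lemma finite_of_isZero {M : ModuleCat.{u} A} (h : IsZero M) : Module.Finite A M := by
  have := ModuleCat.subsingleton_of_isZero h
  infer_instance

/-- If `p ≤ q`, then `A ⧸ q` is the restriction of a finitely generated `A ⧸ p`-module. -/
lemma exists_restrictScalars_iso_quotient {p q : Ideal A} (hpq : p ≤ q) :
    ∃ M : ModuleCat.{u} (A ⧸ p), Module.Finite (A ⧸ p) M ∧
      Nonempty ((ModuleCat.restrictScalars.{u} (Ideal.Quotient.mk p)).obj M ≅
        ModuleCat.of A (A ⧸ q)) := by
  let φ : A ⧸ p →+* A ⧸ q := Ideal.Quotient.factor hpq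
  let _ : Module (A ⧸ p) (A ⧸ q) := Module.compHom _ φ
  refine ⟨ModuleCat.of (A ⧸ p) (A ⧸ q), ?_, ⟨LinearEquiv.toModuleIso
    { (AddEquiv.refl (A ⧸ q)) with
      map_smul' := ?_ }⟩⟩
  · refine Module.Finite.of_surjective (LinearMap.toSpanSingleton (A ⧸ p) (A ⧸ q) 1) fun x => ?_
    obtain ⟨y, rfl⟩ := Ideal.Quotient.factor_surjective hpq x
    exact ⟨y, mul_one (φ y)⟩
  -- both actions of `r` on `x` are multiplication by the class of `r` in `A ⧸ q`
  · intro r x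
    exact (Algebra.smul_def r (x : A ⧸ q)).symm

variable [HasDerivedCategory.{v} (ModuleCat.{u} A)]

lemma hasBoundedFGHomology_single (M : ModuleCat.{u} A) [Module.Finite A M] :
    HasBoundedFGHomology A ((singleFunctor (ModuleCat.{u} A) 0).obj M) := by
  have key : ∀ m : ℤ, m ≠ 0 →
      IsZero ((homologyFunctor _ m).obj ((singleFunctor (ModuleCat.{u} A) 0).obj M)) := by
    intro m hm
    rcases lt_or_gt_of_ne hm with h | h
    · exact isZero_of_isGE _ 0 m h
    · exact isZero_of_isLE _ 0 m h
  refine ⟨fun m => ?_, (Set.finite_singleton (0 : ℤ)).subset fun m hm => ?_⟩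
  · by_cases hm : m = 0
    · subst hm
      have e : (homologyFunctor _ 0).obj ((singleFunctor _ 0).obj M) ≅ M :=
        (singleFunctorCompHomologyFunctorIso (ModuleCat.{u} A) 0).app M
      exact finite_of_iso e.symm
    · exact finite_of_isZero (key m hm)
  · by_contra h
    exact hm (key m h)

/-- Dévissage by truncation, by induction on the amplitude `k`: a complex with finitely generated
homology concentrated in degrees `[a, a + k]` is an extension of a complex concentrated in
`[a + 1, a + k]` by its part in degree `a`, and a complex concentrated in a single degree is a shift of a
module. -/
lemma mem_of_finite_homology_of_isGE_of_isLE [IsNoetherianRing A]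
    {S : Set (DerivedCategory (ModuleCat.{u} A))} (hS : IsThickSubcat S)
    (hmod : ∀ M : ModuleCat.{u} A, Module.Finite A M → (singleFunctor _ 0).obj M ∈ S)
    (k : ℕ) : ∀ (a : ℤ) (E : DerivedCategory (ModuleCat.{u} A)),
      (∀ m, Module.Finite A ((homologyFunctor (ModuleCat.{u} A) m).obj E)) →
      E.IsGE a → E.IsLE (a + k) → E ∈ S := by
  induction k with
  | zero =>
    intro a E hfin _ hle
    have : E.IsLE a := by simpa using hle
    obtain ⟨M, ⟨e⟩⟩ := exists_iso_singleFunctor_obj_of_isGE_of_isLE E a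
    have := hfin a
    have hM : Module.Finite A M :=
      finite_of_iso ((homologyFunctor _ a).mapIso e ≪≫
        (singleFunctorCompHomologyFunctorIso _ a).app M)
    exact hS.of_iso (((singleFunctors _).shiftIso (-a) a 0 (by lia)).app M ≪≫ e.symm)
      (hS.2.1 _ (hmod M hM) (-a))
  | succ k ih =>
    intro a E hfin _ _
    obtain ⟨X, Y, hX, hY, f, g, h, hT⟩ := TStructure.t.exists_triangle E a (a + 1) rfl
    rw [TStructure.t.le_iff_isLE] at hX
    rw [TStructure.t.ge_iff_isGE] at hY
    -- in degrees at most `a`, the homology of `X` embeds in that of `E`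
    have hmono : ∀ i, i ≤ a → Mono ((homologyFunctor _ i).map f) := fun i hi =>
      (HomologySequence.mono_homologyMap_mor₁_iff _ hT (i - 1) i (by lia)).2
        ((isZero_of_isGE Y (a + 1) (i - 1) (by lia)).eq_of_src _ _)
    -- in degrees at least `a`, the homology of `Y` is a quotient of that of `E`
    have hepi : ∀ i, a ≤ i → Epi ((homologyFunctor _ i).map g) := fun i hi =>
      (HomologySequence.epi_homologyMap_mor₂_iff _ hT i (i + 1) (by lia)).2
        ((isZero_of_isLE X a (i + 1) (by lia)).eq_of_tgt _ _)
    have hXmem : X ∈ S := by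
      refine ih a X (fun m => ?_) ((isGE_iff _ _).2 fun i hi => ?_)
        (TStructure.t.isLE_of_le X a _ (by lia))
      · rcases le_or_gt m a with hm | hm
        · have := hfin m
          exact Module.Finite.of_injective ((homologyFunctor _ m).map f).hom
            ((ModuleCat.mono_iff_injective _).1 (hmono m hm))
        · exact finite_of_isZero (isZero_of_isLE X a m hm)
      · have := hmono i hi.le
        exact (isZero_of_isGE E a i hi).of_mono ((homologyFunctor _ i).map f)
    have hYmem : Y ∈ S := by
      refine ih (a + 1) Y (fun m => ?_) hY ((isLE_iff _ _).2 fun i hi => ?_)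
      · rcases le_or_gt a m with hm | hm
        · have := hfin m
          exact Module.Finite.of_surjective ((homologyFunctor _ m).map g).hom
            ((ModuleCat.epi_iff_surjective _).1 (hepi m hm))
        · exact finite_of_isZero (isZero_of_isGE Y (a + 1) m (by lia))
      · have := hepi i (by lia)
        exact (isZero_of_isLE E (a + (k + 1 : ℕ)) i (by push_cast; lia)).of_epi
          ((homologyFunctor _ i).map g)
    exact hS.ext₂ _ hT hXmem hYmem

/-- A thick subcategory containing all finitely generated modules contains all objects with bounded
finitely generated homology. -/
lemma mem_of_hasBoundedFGHomology [IsNoetherianRing A]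
    {S : Set (DerivedCategory (ModuleCat.{u} A))} (hS : IsThickSubcat S)
    (hmod : ∀ M : ModuleCat.{u} A, Module.Finite A M → (singleFunctor _ 0).obj M ∈ S)
    (E : DerivedCategory (ModuleCat.{u} A)) (hE : HasBoundedFGHomology A E) : E ∈ S := by
  obtain ⟨a, ha⟩ := hE.2.bddBelow
  obtain ⟨b, hb⟩ := hE.2.bddAbove
  refine mem_of_finite_homology_of_isGE_of_isLE hS hmod (b - a).toNat a E hE.1
    ((isGE_iff _ _).2 fun i hi => ?_) ((isLE_iff _ _).2 fun i hi => ?_)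
  · by_contra h
    have := ha h
    lia
  · by_contra h
    have := hb h
    lia

/-- A thick subcategory of `D(Mod A)` containing all `A ⧸ q` with `q` prime contains all finitely
generated modules, because these have finite filtrations with subquotients of this form. -/
lemma single_mem_of_quotient_prime [IsNoetherianRing A]
    {S : Set (DerivedCategory (ModuleCat.{u} A))} (hS : IsThickSubcat S)
    (hq : ∀ q : Ideal A, q.IsPrime →
      (singleFunctor (ModuleCat.{u} A) 0).obj (ModuleCat.of A (A ⧸ q)) ∈ S)
    (M : Type u) [AddCommGroup M] [Module A M] (hM : Module.Finite A M) :
    (singleFunctor _ 0).obj (ModuleCat.of A M) ∈ S := by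
  induction hM using IsNoetherianRing.induction_on_isQuotientEquivQuotientPrime A with
  | subsingleton N =>
    exact hS.1 _ (Functor.map_isZero _ (ModuleCat.isZero_of_subsingleton _))
  | quotient N q e =>
    exact hS.of_iso ((singleFunctor _ 0).mapIso e.symm.toModuleIso) (hq q.1 q.2)
  | exact N₁ N₂ N₃ f g hf hg hfg h₁ h₃ =>
    have hSE : (ShortComplex.mk (ModuleCat.ofHom f) (ModuleCat.ofHom g)
        (by ext x; exact hfg.apply_apply_eq_zero x)).ShortExact :=
      { exact := (ShortComplex.ShortExact.moduleCat_exact_iff_function_exact _).2 hfg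
        mono_f := (ModuleCat.mono_iff_injective _).2 hf
        epi_g := (ModuleCat.epi_iff_surjective _).2 hg }
    exact hS.ext₂ _ hSE.singleTriangle_distinguished h₁ h₃

end Derived

/--
let `R` be a commutative Noetherian ring of finite Krull dimension with
minimal primes `𝔭 1, …, 𝔭 n`. For each `i`, let `G i` be a (complex representing an)
object of `D(Mod (R ⧸ 𝔭 i))` with bounded finitely generated homology which classically
generates all objects of `D(Mod (R ⧸ 𝔭 i))` with bounded finitely generated homology.
Then every object of `D(Mod R)` with bounded finitely generated homology lies in the
smallest thick subcategory of `D(Mod R)` containing the direct sum `⊕ᵢ (G i)`, each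
`G i` being regarded as a complex of `R`-modules via restriction of scalars along
`R → R ⧸ 𝔭 i`.
-/
theorem statement17 (R : Type u) [CommRing R] [IsNoetherianRing R]
    (hdim : ringKrullDim R < ⊤)
    [HasDerivedCategory (ModuleCat.{u} R)]
    (n : ℕ) (p : Fin n → Ideal R) (hprime : ∀ i, (p i).IsPrime)
    (hmin : {q : Ideal R | q ∈ minimalPrimes R} = Set.range p)
    [∀ i, HasDerivedCategory (ModuleCat.{u} (R ⧸ p i))]
    (G : ∀ i, CochainComplex (ModuleCat.{u} (R ⧸ p i)) ℤ)
    (hGfg : ∀ i, HasBoundedFGHomology (R ⧸ p i) (DerivedCategory.Q.obj (G i)))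
    (hGgen : ∀ (i : Fin n) (X : DerivedCategory (ModuleCat.{u} (R ⧸ p i))),
      HasBoundedFGHomology (R ⧸ p i) X →
      X ∈ thickClosure {DerivedCategory.Q.obj (G i)})
    (E : DerivedCategory (ModuleCat.{u} R)) (hE : HasBoundedFGHomology R E) :
    E ∈ thickClosure
      {DerivedCategory.Q.obj (∐ (fun i : Fin n =>
        ((ModuleCat.restrictScalars.{u} (Ideal.Quotient.mk (p i))).mapHomologicalComplex
          (ComplexShape.up ℤ)).obj (G i)))} := by
  set F : ∀ i, ModuleCat.{u} (R ⧸ p i) ⥤ ModuleCat.{u} R := fun i =>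
    ModuleCat.restrictScalars.{u} (Ideal.Quotient.mk (p i))
  set K : Fin n → CochainComplex (ModuleCat.{u} R) ℤ := fun i =>
    ((F i).mapHomologicalComplex (ComplexShape.up ℤ)).obj (G i)
  have hS := isThickSubcat_thickClosure {DerivedCategory.Q.obj (∐ K)}
  -- each `K i` is a direct summand of the coproduct, and `Q` preserves retracts
  have hKmem : ∀ i, DerivedCategory.Q.obj (K i) ∈ thickClosure {DerivedCategory.Q.obj (∐ K)} :=
    fun i => hS.2.2.2 _ _ (subset_thickClosure _ rfl)
      ⟨DerivedCategory.Q.map (Sigma.ι K i), DerivedCategory.Q.map (Sigma.π K i), by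
        rw [← Functor.map_comp, Sigma.ι_π_eq_id, CategoryTheory.Functor.map_id]⟩
  -- the objects of `D(Mod (R ⧸ p i))` whose restriction lies in the closure form a thick
  -- subcategory containing `G i`, hence it contains all finitely generated `R ⧸ p i`-modules
  have hres : ∀ i (M : ModuleCat.{u} (R ⧸ p i)), Module.Finite (R ⧸ p i) M →
      (DerivedCategory.singleFunctor _ 0).obj ((F i).obj M) ∈
        thickClosure {DerivedCategory.Q.obj (∐ K)} := by
    intro i M hM
    refine hS.of_iso (((F i).mapDerivedCategorySingleFunctor 0).app M) ?_
    refine thickClosure_subset ?_ (hS.preimage (F i).mapDerivedCategory)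
      (hGgen i _ (hasBoundedFGHomology_single M))
    rintro _ rfl
    exact hS.of_iso ((F i).mapDerivedCategoryFactors.symm.app (G i)) (hKmem i)
  refine mem_of_hasBoundedFGHomology hS (fun M hM =>
    single_mem_of_quotient_prime hS (fun q hq => ?_) M hM) E hE
  obtain ⟨p', hp', hle⟩ := Ideal.exists_minimalPrimes_le (bot_le : (⊥ : Ideal R) ≤ q)
  obtain ⟨i, rfl⟩ : p' ∈ Set.range p := hmin ▸ hp'
  obtain ⟨M, hM, ⟨e⟩⟩ := exists_restrictScalars_iso_quotient hle
  exact hS.of_iso ((DerivedCategory.singleFunctor _ 0).mapIso e) (hres i M hM)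

end Stmt
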